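/- (Lopatinskiĭ determinant for a right-going Lax shock.) In the setting of a 2×2 system of conservation laws ∂ₜf₀(U) + ∂ₓf(U) = 0 with A(u) = f₀'(u)⁻¹f'(u), let (uˡ, uʳ) satisfy the Rankine–Hugoniot conditions with speed χ = χ(uˡ,uʳ), let e₋(uˡ) be an eigenvector of A(uˡ) for its eigenvalue -λ₋(uˡ), and let Φ(uˡ,uʳ) = ⟦f⟧·⟦f₀⟧⊥. Then the scalar Lopatinskiĭ quantity L = ∇_{uˡ}Φ · e₋(uˡ) satisfies L = (χ + λ₋(uˡ)) ⟦f₀⟧⊥ · f₀'(uˡ)e₋(uˡ). In particular, if χ + λ₋(uˡ) > 0 then L ≠ 0 if and only if (f₀'(uˡ)e₋(uˡ)) · ⟦f₀⟧⊥ ≠ 0. -/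

import Mathlib

open Matrix

/-- Rotation of a plane vector by `π/2`. -/
def perp (v : Fin 2 → ℝ) : Fin 2 → ℝ := ![-v 1, v 0]

/-- **Lopatinskiĭ determinant for a right-going Lax shock.** At a Rankine–Hugoniot point
`(uˡ,uʳ)` with speed `χ`, and with `e₋` an eigenvector of `A(uˡ) = f₀'(uˡ)⁻¹f'(uˡ)` for the
eigenvalue `-λ₋` (expressed as `f'(uˡ)e₋ = -λ₋ f₀'(uˡ)e₋`), the scalar Lopatinskiĭ quantity
`L = ∇_{uˡ}Φ · e₋` satisfies `L = (χ + λ₋) ⟦f₀⟧⊥ · f₀'(uˡ)e₋`; in particular if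
`χ + λ₋ > 0` then `L ≠ 0 ↔ (f₀'(uˡ)e₋) · ⟦f₀⟧⊥ ≠ 0`. -/
theorem stmt17 (f0 f : (Fin 2 → ℝ) → (Fin 2 → ℝ))
    (hf0 : ContDiff ℝ (⊤ : ℕ∞) f0) (hf : ContDiff ℝ (⊤ : ℕ∞) f)
    (hinv : ∀ u : Fin 2 → ℝ, Function.Bijective (fderiv ℝ f0 u))
    (ul ur em : Fin 2 → ℝ) (lm χ₀ : ℝ)
    (hne : f0 ur ≠ f0 ul)
    (hRH : χ₀ • (f0 ur - f0 ul) = f ur - f ul)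
    (hem : em ≠ 0)
    (heig : fderiv ℝ f ul em = (-lm) • fderiv ℝ f0 ul em) :
    fderiv ℝ (fun w : Fin 2 → ℝ => (f ur - f w) ⬝ᵥ perp (f0 ur - f0 w)) ul em =
      (χ₀ + lm) * (perp (f0 ur - f0 ul) ⬝ᵥ fderiv ℝ f0 ul em) ∧
    (0 < χ₀ + lm →
      (fderiv ℝ (fun w : Fin 2 → ℝ => (f ur - f w) ⬝ᵥ perp (f0 ur - f0 w)) ul em ≠ 0 ↔
        (fderiv ℝ f0 ul em) ⬝ᵥ perp (f0 ur - f0 ul) ≠ 0)) := by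
  have d0 : HasFDerivAt f0 (fderiv ℝ f0 ul) ul :=
    ((hf0.differentiable (by simp)) ul).hasFDerivAt
  have d1 : HasFDerivAt f (fderiv ℝ f ul) ul :=
    ((hf.differentiable (by simp)) ul).hasFDerivAt
  have a := fun i => ((hasFDerivAt_pi'.1 d0) i).const_sub (f0 ur i)
  have b := fun i => ((hasFDerivAt_pi'.1 d1) i).const_sub (f ur i)
  have hfun : (fun w : Fin 2 → ℝ => (f ur - f w) ⬝ᵥ perp (f0 ur - f0 w)) =
      (fun w => (f ur 1 - f w 1) * (f0 ur 0 - f0 w 0)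
        - (f ur 0 - f w 0) * (f0 ur 1 - f0 w 1)) := by
    funext w
    simp [perp, dotProduct, Fin.sum_univ_two]
    ring
  have key : fderiv ℝ (fun w : Fin 2 → ℝ => (f ur - f w) ⬝ᵥ perp (f0 ur - f0 w)) ul em =
      (χ₀ + lm) * (perp (f0 ur - f0 ul) ⬝ᵥ fderiv ℝ f0 ul em) := by
    have h := ((b 1).mul (a 0)).sub ((b 0).mul (a 1))
    have h' := h.fderiv
    have r0 := congrFun hRH 0
    have r1 := congrFun hRH 1
    simp only [Pi.smul_apply, Pi.sub_apply, smul_eq_mul] at r0 r1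
    rw [hfun]
    refine (congrArg (fun L => L em) h').trans ?_
    simp [perp, dotProduct, Fin.sum_univ_two, heig, ← r0, ← r1]
    ring
  refine ⟨key, fun hpos => ?_⟩
  rw [key, dotProduct_comm (fderiv ℝ f0 ul em)]
  simp [hpos.ne']
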